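/- For every β(0,1)-tree T, the number of moderate nodes on the rightmost path of T equals the number of open nodes of T; that is, rmod(T) = open(T). -/

import Mathlib

/-! In a nontrivial β(0,1)-tree every non-leaf node `x` of the rightmost path is open exactly when
its successor on that path is a moderate non-leaf. Passing from an open node to its successor
therefore matches the open non-leaf nodes with the moderate non-leaf nodes other than the root.
The root is excessive, and the rightmost leaf is both open and moderate, so the two counts agree.
The induction along the path is `countP_open_add`: the only defect, for an arbitrary subtree, is
that its own root may be a moderate non-leaf that no node of the subtree accounts for. -/


/-- Labeled rooted plane trees: each node carries a natural-number label and an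
ordered list of subtrees. -/
inductive BTree : Type
  | node : ℕ → List BTree → BTree
deriving Repr

namespace BTree

/-- The trivial β(0,1)-tree ε: a single node labeled 0. -/
def eps : BTree := node 0 []

/-- The label of the root of a tree. -/
def label : BTree → ℕ
  | node n _ => n

/-- The list of subtrees of the root. -/
def children : BTree → List BTree
  | node _ ts => ts

/-- The sum of the labels of the children of the root. -/
def childSum (t : BTree) : ℕ := (t.children.map label).sum

/-- Validity condition for non-root nodes of a β(0,1)-tree: leaves have label 0,
and the label of every node exceeds the sum of its children's labels by at most one. -/
inductive ValidSub : BTree → Prop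
  | mk (n : ℕ) (ts : List BTree) :
      (ts = [] → n = 0) →
      n ≤ (ts.map label).sum + 1 →
      (∀ t ∈ ts, ValidSub t) →
      ValidSub (node n ts)

/-- `t` is a β(0,1)-tree: the trivial tree is the single node labeled 0; otherwise the
root label is one more than the sum of its children's labels, and every non-root node
has label at most one more than the sum of its children's labels, leaves having label 0. -/
def IsBeta (t : BTree) : Prop :=
  (t.children = [] → t.label = 0) ∧
  (t.children ≠ [] → t.label = childSum t + 1) ∧
  ∀ c ∈ t.children, ValidSub c

mutual
/-- The rightmost path of a tree, from the root to the rightmost leaf; each node on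
the path is recorded together with its full subtree. -/
def rpath : BTree → List BTree
  | node n ts => node n ts :: rpathL ts
def rpathL : List BTree → List BTree
  | [] => []
  | [t] => rpath t
  | _ :: t :: ts => rpathL (t :: ts)
end

/-- A node is moderate if its label does not exceed the sum of its children's labels. -/
def moderate (t : BTree) : Bool := decide (t.label ≤ childSum t)

/-- A node (on the rightmost path) is open iff it is a leaf (i.e. it is the rightmost
leaf), or its rightmost child is a non-leaf moderate node. -/
def isOpenNode (t : BTree) : Bool :=
  match t.children.getLast? with
  | none => true
  | some c => !c.children.isEmpty && moderate c

/-- The statistic `root`: the label of the root. -/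
def rootStat (t : BTree) : ℕ := t.label

/-- The statistic `open`: the number of open nodes (all of which lie on the
rightmost path), with open(ε) = 0. -/
def openStat : BTree → ℕ
  | node 0 [] => 0
  | t => (rpath t).countP isOpenNode

/-- The statistic `rmod`: the number of moderate nodes on the rightmost path,
with rmod(ε) = 0. -/
def rmodStat : BTree → ℕ
  | node 0 [] => 0
  | t => (rpath t).countP moderate

mutual
/-- The number of nodes of a tree. -/
def size : BTree → ℕ
  | node _ ts => 1 + sizeL ts
def sizeL : List BTree → ℕ
  | [] => 0
  | t :: ts => size t + sizeL ts
end

mutual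
/-- The number of excessive nodes of a tree (nodes whose label exceeds the sum of the
labels of their children). -/
def excT : BTree → ℕ
  | node n ts => (if (ts.map label).sum < n then 1 else 0) + excL ts
def excL : List BTree → ℕ
  | [] => 0
  | t :: ts => excT t + excL ts
end

/-- The sum U ⊕ V of two trees: identify the two roots into a new root labeled
root(U) + root(V) − 1, its children being those of U followed by those of V. -/
def oplus (u v : BTree) : BTree := node (u.label + v.label - 1) (u.children ++ v.children)

/-- Relabel the root. -/
def setLabel (i : ℕ) (t : BTree) : BTree := node i t.children

/-- λ_i(T): join a new root, labeled i+1, by an edge to the old root, which is relabeled i. -/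
def lam (i : ℕ) (t : BTree) : BTree := node (i + 1) [setLabel i t]

/-- Iterated ⊕ of a list of trees (ε for the empty list). -/
def oplusList : List BTree → BTree
  | [] => eps
  | [t] => t
  | t :: ts => oplus t (oplusList ts)

/-- ρ(T₁,…,T_k) = λ₀(T₁) ⊕ ⋯ ⊕ λ₀(T_k). -/
def rho (Ts : List BTree) : BTree := oplusList (Ts.map (lam 0))

/-- Add one to the label of the root. -/
def incRoot (t : BTree) : BTree := node (t.label + 1) t.children

mutual
/-- Walk down the rightmost path of a tree looking for the i-th open node x, adding one
to each label on the way (through x, and through the rightmost child y of x if x is not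
a leaf); at x, append the children of S. -/
def muT (S : BTree) : ℕ → BTree → BTree
  | i, node n ts =>
    if isOpenNode (node n ts) && decide (i ≤ 1) then
      if ts.isEmpty then node (n + 1) S.children
      else node (n + 1) (ts.dropLast ++ [incRoot (ts.getLastD eps)] ++ S.children)
    else
      node (n + 1) (muL S (if isOpenNode (node n ts) then i - 1 else i) ts)
def muL (S : BTree) (i : ℕ) : List BTree → List BTree
  | [] => []
  | [t] => [muT S i t]
  | t :: ts => t :: muL S i ts
end

/-- μ_i(S,T): identify the i-th open node x on the rightmost path of T with the root of
S, keeping the label of x, and add one to each node on the rightmost path of T between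
the root and y (inclusive), where y = x if x is a leaf and otherwise y is the rightmost
child of x.  (In particular μ₁(S,ε) = S when root(S) = 1.) -/
def mu (i : ℕ) (S T : BTree) : BTree := muT S i T

mutual
/-- Walk down the rightmost path of a tree adding j to every label; at the rightmost
leaf, attach the children of T. -/
def nuT (T : BTree) (j : ℕ) : BTree → BTree
  | node n [] => node (n + j) T.children
  | node n ts => node (n + j) (nuL T j ts)
def nuL (T : BTree) (j : ℕ) : List BTree → List BTree
  | [] => []
  | [t] => [nuT T j t]
  | t :: ts => t :: nuL T j ts
end

/-- ν_i(S,T): identify the rightmost leaf x of S with the root of T, keeping the zero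
label of x, and add i − 1 to each node on the rightmost path of S between the root and
x (inclusive).  (In particular ν₁(S,ε) = S.) -/
def nu (i : ℕ) (S T : BTree) : BTree := nuT T (i - 1) S

/-- σ(T₁,…,T_k) = μ₁(ρ(T_{k−1},…,T₁,ε), T_k). -/
def sigma (Ts : List BTree) : BTree :=
  mu 1 (rho (Ts.dropLast.reverse ++ [eps])) (Ts.getLastD eps)

/-- The maximal suffix of a list of trees all of whose root labels are 0. -/
def zeroSuffix : List BTree → List BTree
  | [] => []
  | t :: ts =>
    let z := zeroSuffix ts
    if z.length = ts.length ∧ t.label = 0 then t :: z else z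

/-- Subtract one from the label of the root. -/
def decRoot (t : BTree) : BTree := node (t.label - 1) t.children

mutual
/-- Inverse of μ on β(0,1)-trees with root label > 1: walk down the rightmost path to
the parent x of the first node labeled 0 on the path (subtracting one from the labels
on the way); the maximal zero-labeled suffix of the children of x is the list of
children of S, the rest (with the label of its last element decremented) are the
children of x in T.  Returns the pair (T, S) such that the input is μ_i(S,T). -/
def decT : BTree → BTree × BTree
  | node n ts =>
    if (ts.getLastD eps).label = 0 then
      let zs := zeroSuffix ts
      let ps := ts.take (ts.length - zs.length)
      (node (n - 1) (if ps.isEmpty then [] else ps.dropLast ++ [decRoot (ps.getLastD eps)]),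
       node 1 zs)
    else
      (node (n - 1) (decL ts).1, (decL ts).2)
def decL : List BTree → List BTree × BTree
  | [] => ([], eps)
  | [t] => ([(decT t).1], (decT t).2)
  | t :: ts => (t :: (decL ts).1, (decL ts).2)
end

/-- Restore the root label of a β(0,1)-tree whose root label was forgotten:
ε for a single node, and otherwise one plus the sum of the children's labels. -/
def makeRoot : BTree → BTree
  | node _ [] => eps
  | node _ ts => node ((ts.map label).sum + 1) ts

/-- Fueled version of the map g.  A β(0,1)-tree with root label 1 is ρ(T₁,…,T_k) where
the Tⱼ are recovered from the children via `makeRoot`, and g maps it to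
σ(g(T₁),…,g(T_k)); a β(0,1)-tree U with root label > 1 is μ_i(S,T) where (T,S) = decT U
and i = open(U) + 1 − open(S) (since open(μ_i(S,T)) = i − 1 + open(S)), and g maps it
to ν_i(g(S),g(T)); finally g(ε) = ε. -/
def gF : ℕ → BTree → BTree
  | 0, t => t
  | fuel + 1, t =>
    match t with
    | node 0 _ => t
    | node 1 cs => sigma (cs.map fun c => gF fuel (makeRoot c))
    | node _ _ =>
      nu (openStat t + 1 - openStat (decT t).2) (gF fuel (decT t).2) (gF fuel (decT t).1)

/-- The map g on β(0,1)-trees: g(ε) = ε, g(ρ(T₁,…,T_k)) = σ(g(T₁),…,g(T_k)), and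
g(μ_i(S,T)) = ν_i(g(S), g(T)).  (The number of nodes suffices as fuel since all
recursive calls are on trees with strictly fewer nodes.) -/
def g (t : BTree) : BTree := gF (size t) t


lemma rpathL_concat (l : List BTree) (c : BTree) : rpathL (l ++ [c]) = rpath c := by
  induction l with
  | nil => simp [rpathL]
  | cons a l ih =>
    cases l with
    | nil => simp [rpathL]
    | cons b l => simpa [rpathL] using ih

lemma rpath_concat (n : ℕ) (l : List BTree) (c : BTree) :
    rpath (node n (l ++ [c])) = node n (l ++ [c]) :: rpath c := by
  rw [rpath, rpathL_concat]

/-- A non-leaf node has the open status read off from its rightmost child `c`. -/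
lemma isOpenNode_concat (n : ℕ) (l : List BTree) (c : BTree) :
    isOpenNode (node n (l ++ [c])) = (!c.children.isEmpty && moderate c) := by
  simp [isOpenNode, children]

/-- Below any non-root node, the moderate nodes of the rightmost path are matched by the open
ones, except for the topmost node when it is a moderate non-leaf: its match is its parent. -/
lemma countP_open_add {t : BTree} (ht : ValidSub t) :
    (rpath t).countP isOpenNode + (if (!t.children.isEmpty && moderate t) = true then 1 else 0) =
      (rpath t).countP moderate := by
  induction ht with
  | mk n ts h0 _ _ ih =>
    rcases List.eq_nil_or_concat ts with rfl | ⟨l, c, rfl⟩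
    · obtain rfl := h0 rfl
      simp [rpath, rpathL, isOpenNode, moderate, children, label, childSum]
    · have hc := ih c (by simp)
      have hne : (node n (l ++ [c])).children.isEmpty = false := by simp [children]
      simp only [List.concat_eq_append] at *
      rw [rpath_concat, List.countP_cons, List.countP_cons, isOpenNode_concat, hc, hne]
      simp

/-- For every β(0,1)-tree T, the number of moderate nodes on the rightmost path of T
equals the number of open nodes of T: rmod(T) = open(T). -/
theorem rmod_eq_open (T : BTree) (hT : IsBeta T) :
    rmodStat T = openStat T := by
  obtain ⟨n, ts⟩ := T
  obtain ⟨h0, h1, h2⟩ := hT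
  rcases List.eq_nil_or_concat ts with rfl | ⟨l, c, rfl⟩
  · obtain rfl : n = 0 := h0 rfl
    rfl
  · simp only [List.concat_eq_append] at *
    have hc := countP_open_add (h2 c (by simp [children]))
    have hroot : moderate (node n (l ++ [c])) = false := by
      have := h1 (by simp [children])
      simp [moderate, this]
    rw [rmodStat, openStat, rpath_concat, List.countP_cons, List.countP_cons,
      isOpenNode_concat, hc, hroot]
    all_goals simp

end BTree
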